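/- There exists a strict linear order ◁' on ℕ such that FO(<,◁') and FO(Bit) define the same relations in every finite prefix; concretely: the relation Bit is FO(<,◁')-definable in every finite prefix, and conversely both < and ◁' are FO(Bit)-definable in every finite prefix. -/

import Mathlib

open FirstOrder Language


/-- Relation symbols of the language with a single binary relation `Bit`. -/
inductive BitRel : ℕ → Type
  | bit : BitRel 2

/-- The language with a single binary relation symbol for `Bit`. -/
def LBit : Language := ⟨fun _ => Empty, BitRel⟩

/-- The finite prefix structure `({0,...,n}, Bit)`. -/
def bitStruct (n : ℕ) : LBit.Structure (Fin (n + 1)) where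
  funMap := fun f _ => f.elim
  RelMap := fun r v =>
    match r with
    | .bit => Nat.testBit (v 0 : ℕ) (v 1 : ℕ) = true

/-- Relation symbols of a language with two binary relation symbols. -/
inductive RelPair : ℕ → Type
  | lt : RelPair 2
  | snd : RelPair 2

/-- A language with two binary relation symbols: one for `<` and one further one. -/
def LPair : Language := ⟨fun _ => Empty, RelPair⟩

/-- The finite prefix structure `({0,...,n}, <, R)`, interpreting the first symbol by
the standard order `<` and the second one by the binary relation `R`. -/
def pairStruct (R : ℕ → ℕ → Prop) (n : ℕ) : LPair.Structure (Fin (n + 1)) where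
  funMap := fun f _ => f.elim
  RelMap := fun r v =>
    match r with
    | .lt => (v 0 : ℕ) < (v 1 : ℕ)
    | .snd => R (v 0 : ℕ) (v 1 : ℕ)

/-!
`<` from `Bit`: comparing numbers by the largest binary digit in which they differ lifts the order
of the exponents to the order of the numbers, and `<` is the unique fixed point of this lifting, so
every relation `r` contained in its lift is contained in `<`. A number `F` codes a family of sets,
hence a relation by separation; the family of initial segments of `{0, ..., B - 1}` codes the
restriction of `<`, and three lifts extend it to all numbers below `2 ^ 2 ^ 2 ^ B`. If `B` is least
such that `x` is below this bound, the code is at most `x`. Thus `y < x` holds if and only if `y`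
precedes `x` in the triple lift of the relation coded by some `F` contained in its own lift.

The second order: an even number stands for the set of its binary digits and an odd number `x` for
the cut `{x, x + 1, ...}`, and sets are compared lexicographically, the least difference deciding.
An even `y` precedes an odd `x` exactly when `2 ^ x ∣ y`, and precedes `2 ^ c` exactly when
`2 ^ (c + 1) ∣ y`, so both orders together define divisibility by `2 ^ b` for all `b`. The digit `b`
of `a` is `1` if and only if the largest multiple of `2 ^ b` up to `a` is not a multiple of
`2 ^ (b + 1)`.
-/

/-! ### Relations definable in every finite prefix -/

section Definability

variable {L : FirstOrder.Language} {α β : Type*}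

/-- The relation `R` on `ℕ`, with arguments indexed by `α`, is first-order definable in every
finite prefix: one formula defines its restriction to `{0, ..., n}` in `S n` for all `n`. -/
def PrefixDefinable (S : ∀ n : ℕ, L.Structure (Fin (n + 1))) (R : (α → ℕ) → Prop) : Prop :=
  ∃ φ : L.Formula α, ∀ n (v : α → Fin (n + 1)),
    letI := S n
    φ.Realize v ↔ R fun i => v i

/-- The unary case of `PrefixDefinable`. -/
abbrev PrefixDefinable₁ (S : ∀ n : ℕ, L.Structure (Fin (n + 1))) (R : ℕ → Prop) : Prop :=
  PrefixDefinable S fun v : Fin 1 → ℕ => R (v 0)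

/-- The binary case of `PrefixDefinable`. -/
abbrev PrefixDefinable₂ (S : ∀ n : ℕ, L.Structure (Fin (n + 1))) (R : ℕ → ℕ → Prop) : Prop :=
  PrefixDefinable S fun v : Fin 2 → ℕ => R (v 0) (v 1)

/-- The ternary case of `PrefixDefinable`. -/
abbrev PrefixDefinable₃ (S : ∀ n : ℕ, L.Structure (Fin (n + 1))) (R : ℕ → ℕ → ℕ → Prop) : Prop :=
  PrefixDefinable S fun v : Fin 3 → ℕ => R (v 0) (v 1) (v 2)

variable {S : ∀ n : ℕ, L.Structure (Fin (n + 1))}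

theorem PrefixDefinable₂.exists_formula {R : ℕ → ℕ → Prop} (h : PrefixDefinable₂ S R) :
    ∃ φ : L.Formula (Fin 2), ∀ n : ℕ,
      letI := S n
      ∀ a b : Fin (n + 1), φ.Realize ![a, b] ↔ R a b :=
  let ⟨φ, hφ⟩ := h
  ⟨φ, fun n a b => hφ n ![a, b]⟩

theorem prefixDefinable₂_of_relMap {R : ℕ → ℕ → Prop} (r : L.Relations 2)
    (hr : ∀ n (v : Fin 2 → Fin (n + 1)),
      (letI := S n; Structure.RelMap r v) ↔ R (v 0) (v 1)) :
    PrefixDefinable₂ S R := by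
  refine ⟨r.formula₂ (Term.var 0) (Term.var 1), fun n v => ?_⟩
  let := S n
  exact Formula.realize_rel₂.trans (hr n _)

theorem prefixDefinable_eq (i j : α) : PrefixDefinable S fun v : α → ℕ => v i = v j := by
  refine ⟨Term.equal (Term.var i) (Term.var j), fun n v => ?_⟩
  let := S n
  exact Formula.realize_equal.trans Fin.ext_iff

namespace PrefixDefinable

variable {R R' : (α → ℕ) → Prop}

theorem congr (hR : ∀ v, R v ↔ R' v) (h : PrefixDefinable S R') : PrefixDefinable S R :=
  (funext fun v => propext (hR v)) ▸ h

theorem comp (h : PrefixDefinable S R) (f : α → β) :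
    PrefixDefinable S fun v : β → ℕ => R (v ∘ f) := by
  obtain ⟨φ, hφ⟩ := h
  refine ⟨φ.relabel f, fun n v => ?_⟩
  let := S n
  exact Formula.realize_relabel.trans (hφ n (v ∘ f))

theorem comp₁ {R : ℕ → Prop} (h : PrefixDefinable₁ S R) (i : α) :
    PrefixDefinable S fun v : α → ℕ => R (v i) :=
  h.comp ![i]

theorem comp₂ {R : ℕ → ℕ → Prop} (h : PrefixDefinable₂ S R) (i j : α) :
    PrefixDefinable S fun v : α → ℕ => R (v i) (v j) :=
  h.comp ![i, j]

theorem comp₃ {R : ℕ → ℕ → ℕ → Prop} (h : PrefixDefinable₃ S R) (i j k : α) :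
    PrefixDefinable S fun v : α → ℕ => R (v i) (v j) (v k) :=
  h.comp ![i, j, k]

theorem not (h : PrefixDefinable S R) : PrefixDefinable S fun v => ¬ R v := by
  obtain ⟨φ, hφ⟩ := h
  refine ⟨φ.not, fun n v => ?_⟩
  let := S n
  exact Formula.realize_not.trans (not_congr (hφ n v))

theorem imp (h : PrefixDefinable S R) (h' : PrefixDefinable S R') :
    PrefixDefinable S fun v => R v → R' v := by
  obtain ⟨φ, hφ⟩ := h
  obtain ⟨ψ, hψ⟩ := h'
  refine ⟨φ.imp ψ, fun n v => ?_⟩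
  let := S n
  exact Formula.realize_imp.trans (imp_congr (hφ n v) (hψ n v))

theorem and (h : PrefixDefinable S R) (h' : PrefixDefinable S R') :
    PrefixDefinable S fun v => R v ∧ R' v :=
  .congr (fun _ => by tauto) (h.imp h'.not).not

theorem or (h : PrefixDefinable S R) (h' : PrefixDefinable S R') :
    PrefixDefinable S fun v => R v ∨ R' v :=
  .congr (fun _ => or_iff_not_imp_left) (h.not.imp h')

theorem iff (h : PrefixDefinable S R) (h' : PrefixDefinable S R') :
    PrefixDefinable S fun v => (R v ↔ R' v) :=
  .congr (fun _ => iff_iff_implies_and_implies) ((h.imp h').and (h'.imp h))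

section Quantifiers

variable {Q : (α → ℕ) → ℕ → Prop}
  (h : PrefixDefinable S fun w : α ⊕ Unit → ℕ => Q (fun i => w (Sum.inl i)) (w (Sum.inr ())))

include h

theorem exists_of_exists_le
    (hQ : ∀ n v, (∀ i, v i ≤ n) → (∃ x, Q v x) → ∃ x ≤ n, Q v x) :
    PrefixDefinable S fun v => ∃ x, Q v x := by
  obtain ⟨φ, hφ⟩ := h
  refine ⟨φ.iExs Unit, fun n v => ?_⟩
  let := S n
  refine Formula.realize_iExs.trans ⟨fun ⟨x, hx⟩ => ⟨x (), (hφ n _).mp hx⟩, fun hex => ?_⟩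
  obtain ⟨x, hxn, hx⟩ := hQ n _ (fun i => (v i).is_le) hex
  exact ⟨fun _ => ⟨x, Nat.lt_succ_of_le hxn⟩, (hφ n _).mpr hx⟩

theorem forall_of_forall_le
    (hQ : ∀ n v, (∀ i, v i ≤ n) → (∀ x ≤ n, Q v x) → ∀ x, Q v x) :
    PrefixDefinable S fun v => ∀ x, Q v x := by
  refine .congr (fun v => not_exists_not.symm) (.not (exists_of_exists_le h.not ?_))
  intro n v hv hex
  by_contra! hle
  exact hex.elim fun x hx => hx (hQ n v hv hle x)

variable {P : ℕ → ℕ → Prop} (hP : PrefixDefinable₂ S P) (hle : ∀ {a x}, P a x → x ≤ a)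

include hP hle

theorem exists_bounded (i : α) : PrefixDefinable S fun v => ∃ x, P (v i) x ∧ Q v x :=
  exists_of_exists_le (.and (hP.comp₂ (Sum.inl i) (Sum.inr ())) h)
    fun _ _ hv ⟨x, hPx, hQx⟩ => ⟨x, (hle hPx).trans (hv i), hPx, hQx⟩

theorem forall_bounded (i : α) : PrefixDefinable S fun v => ∀ x, P (v i) x → Q v x :=
  forall_of_forall_le (.imp (hP.comp₂ (Sum.inl i) (Sum.inr ())) h)
    fun _ _ hv hQ x hPx => hQ x ((hle hPx).trans (hv i)) hPx

end Quantifiers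

section Order

variable (hlt : PrefixDefinable₂ S fun a b => a < b)

include hlt

theorem le_of_lt : PrefixDefinable₂ S fun a b => a ≤ b :=
  .congr (fun _ => not_lt.symm) (hlt.comp₂ 1 0).not

theorem exists_lt {Q : (α → ℕ) → ℕ → Prop} (i : α)
    (h : PrefixDefinable S fun w : α ⊕ Unit → ℕ => Q (fun i => w (Sum.inl i)) (w (Sum.inr ()))) :
    PrefixDefinable S fun v => ∃ x < v i, Q v x :=
  h.exists_bounded (P := fun a x => x < a) (hlt.comp₂ 1 0) Nat.le_of_lt i

theorem forall_lt {Q : (α → ℕ) → ℕ → Prop} (i : α)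
    (h : PrefixDefinable S fun w : α ⊕ Unit → ℕ => Q (fun i => w (Sum.inl i)) (w (Sum.inr ()))) :
    PrefixDefinable S fun v => ∀ x < v i, Q v x :=
  h.forall_bounded (P := fun a x => x < a) (hlt.comp₂ 1 0) Nat.le_of_lt i

theorem exists_le {Q : (α → ℕ) → ℕ → Prop} (i : α)
    (h : PrefixDefinable S fun w : α ⊕ Unit → ℕ => Q (fun i => w (Sum.inl i)) (w (Sum.inr ()))) :
    PrefixDefinable S fun v => ∃ x ≤ v i, Q v x :=
  h.exists_bounded (P := fun a x => x ≤ a) (hlt.le_of_lt.comp₂ 1 0) id i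

theorem forall_le {Q : (α → ℕ) → ℕ → Prop} (i : α)
    (h : PrefixDefinable S fun w : α ⊕ Unit → ℕ => Q (fun i => w (Sum.inl i)) (w (Sum.inr ()))) :
    PrefixDefinable S fun v => ∀ x ≤ v i, Q v x :=
  h.forall_bounded (P := fun a x => x ≤ a) (hlt.le_of_lt.comp₂ 1 0) id i

theorem succ_of_lt : PrefixDefinable₂ S fun a b => b = a + 1 :=
  .congr
    (fun v => show v 1 = v 0 + 1 ↔ v 0 < v 1 ∧ ∀ c < v 1, ¬ v 0 < c from
      ⟨fun h => ⟨by omega, fun c hc => by omega⟩, fun ⟨hv, h⟩ =>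
        le_antisymm (not_lt.mp fun hs => h _ hs (Nat.lt_succ_self _)) hv⟩)
    (.and hlt (hlt.forall_lt 1 (hlt.comp₂ _ _).not))

theorem eq_const_of_lt (c : ℕ) : PrefixDefinable₁ S fun a => a = c := by
  induction c with
  | zero =>
    exact .congr
      (fun v => show v 0 = 0 ↔ ∀ x < v 0, x ≠ x from
        ⟨by omega, fun h => Nat.eq_zero_of_not_pos fun hv => h 0 hv rfl⟩)
      (hlt.forall_lt 0 (prefixDefinable_eq _ _).not)
  | succ c ih =>
    exact .congr
      (fun v => show v 0 = c + 1 ↔ ∃ b < v 0, b = c ∧ v 0 = b + 1 from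
        ⟨fun h => ⟨c, by omega, rfl, h⟩, fun ⟨_, _, rfl, h⟩ => h⟩)
      (hlt.exists_lt 0 (.and (ih.comp₁ _) (hlt.succ_of_lt.comp₂ _ _)))

end Order

end PrefixDefinable

end Definability

/-! ### Describing `<` by binary digits -/

/-- The lift of a relation `r` on exponents to numbers: among the bits in which `x` and `y` differ,
one that belongs to `x` lies `r`-above all those that belong to `y`. -/
def bitLift (r : ℕ → ℕ → Prop) (y x : ℕ) : Prop :=
  ∃ z, x.testBit z ∧ ¬ y.testBit z ∧ ∀ j, y.testBit j → ¬ x.testBit j → r j z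

theorem bitLift_mono : Monotone bitLift :=
  fun _ _ hr _ _ ⟨z, hxz, hyz, hz⟩ => ⟨z, hxz, hyz, fun j hyj hxj => hr _ _ (hz j hyj hxj)⟩

theorem lt_of_testBit {a i : ℕ} (h : a.testBit i) : i < a :=
  Nat.lt_two_pow_self.trans_le (Nat.ge_two_pow_of_testBit h)

theorem bitLift_lt : bitLift (· < ·) = (· < ·) := by
  ext y x
  rw [← Finset.orderIsoColex.lt_iff_lt]
  simp [Finset.Colex.toColex_lt_toColex_iff_exists_forall_lt, bitLift]

theorem bitLift_lt_iff {y x : ℕ} : bitLift (· < ·) y x ↔ y < x :=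
  iff_of_eq (congrFun₂ bitLift_lt y x)

theorem le_lt_of_le_bitLift {r : ℕ → ℕ → Prop} (hr : r ≤ bitLift r) : r ≤ (· < ·) := by
  intro y x
  induction x using Nat.strong_induction_on generalizing y with
  | _ x ih =>
    intro hyx
    obtain ⟨z, hxz, hyz, hz⟩ := hr y x hyx
    exact bitLift_lt_iff.mp
      ⟨z, hxz, hyz, fun j hyj hxj => ih z (lt_of_testBit hxz) j (hz j hyj hxj)⟩

theorem bitLift_iff_lt_of_lt_two_pow {r : ℕ → ℕ → Prop} {B : ℕ}
    (hr : ∀ y < B, ∀ x < B, (r y x ↔ y < x)) :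
    ∀ y < 2 ^ B, ∀ x < 2 ^ B, (bitLift r y x ↔ y < x) := by
  intro y hy x hx
  have lt_B {a i : ℕ} (ha : a < 2 ^ B) (h : a.testBit i) : i < B :=
    (Nat.pow_lt_pow_iff_right one_lt_two).mp ((Nat.ge_two_pow_of_testBit h).trans_lt ha)
  rw [← bitLift_lt_iff]
  exact exists_congr fun z => and_congr_right fun hxz => and_congr_right fun _ =>
    forall₃_congr fun j hyj _ => hr j (lt_B hy hyj) z (lt_B hx hxz)

/-- The relation on `ℕ` coded by the family of sets coded in binary by `F`:
some member of the family contains `y` but not `x`, and `x` belongs to another member. -/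
def familyRel (F y x : ℕ) : Prop :=
  ∃ u, F.testBit u ∧ u.testBit y ∧ ∃ w, F.testBit w ∧ w.testBit x ∧ ¬ u.testBit x

/-- The code of the family of initial segments `{0, ..., i - 1}` with `i ≤ B`, each of which is coded
by `2 ^ i - 1`. -/
def initialSegments (B : ℕ) : ℕ :=
  ∑ u ∈ (Finset.range (B + 1)).image (2 ^ · - 1), 2 ^ u

theorem testBit_initialSegments {B u : ℕ} :
    (initialSegments B).testBit u ↔ ∃ i ≤ B, 2 ^ i - 1 = u := by
  rw [← Nat.mem_bitIndices, ← List.mem_toFinset, initialSegments,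
    Finset.toFinset_bitIndices_sum_two_pow]
  simp

theorem initialSegments_lt (B : ℕ) : initialSegments B < 2 ^ 2 ^ B := by
  refine Nat.lt_pow_two_of_testBit _ fun u hu => ?_
  rw [← Bool.not_eq_true, testBit_initialSegments]
  rintro ⟨i, hi, rfl⟩
  have := Nat.pow_le_pow_right two_pos hi
  have := Nat.two_pow_pos i
  omega

theorem familyRel_initialSegments {B y x : ℕ} :
    familyRel (initialSegments B) y x ↔ y < x ∧ x < B := by
  simp only [familyRel, testBit_initialSegments]
  constructor
  · rintro ⟨_, ⟨i, -, rfl⟩, hy, _, ⟨j, hj, rfl⟩, hx, hux⟩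
    simp only [Nat.testBit_two_pow_sub_one, decide_eq_true_iff] at hy hx hux
    omega
  · rintro ⟨hyx, hxB⟩
    refine ⟨_, ⟨x, hxB.le, rfl⟩, ?_, _, ⟨B, le_rfl, rfl⟩, ?_⟩ <;>
      simp [Nat.testBit_two_pow_sub_one, hyx, hxB]

theorem familyRel_initialSegments_le_bitLift (B : ℕ) :
    familyRel (initialSegments B) ≤ bitLift (familyRel (initialSegments B)) := by
  intro y x hyx
  obtain ⟨hyx, hxB⟩ := familyRel_initialSegments.mp hyx
  obtain ⟨z, hxz, hyz, hz⟩ := bitLift_lt_iff.mpr hyx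
  exact ⟨z, hxz, hyz, fun j hyj hxj => familyRel_initialSegments.mpr
    ⟨hz j hyj hxj, (lt_of_testBit hxz).trans hxB⟩⟩

theorem exists_lt_tower_initialSegments_le {x : ℕ} (hx : 0 < x) :
    ∃ B, x < 2 ^ 2 ^ 2 ^ B ∧ initialSegments B ≤ x := by
  have hex : ∃ B, x < 2 ^ 2 ^ 2 ^ B :=
    ⟨x, Nat.lt_two_pow_self.trans (Nat.lt_two_pow_self.trans Nat.lt_two_pow_self)⟩
  refine ⟨Nat.find hex, Nat.find_spec hex, ?_⟩
  rcases hB : Nat.find hex with _ | b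
  · exact (Nat.le_of_lt_succ (initialSegments_lt 0)).trans hx
  · have hb : 2 ^ 2 ^ 2 ^ b ≤ x := not_lt.mp (Nat.find_min hex (by omega))
    calc initialSegments (b + 1) ≤ 2 ^ 2 ^ (b + 1) := (initialSegments_lt _).le
      _ ≤ 2 ^ 2 ^ 2 ^ b := by
        gcongr
        exacts [one_le_two, one_le_two, Nat.lt_two_pow_self]
      _ ≤ x := hb

theorem lt_of_bitLift_familyRel {F y x : ℕ} (hF : familyRel F ≤ bitLift (familyRel F))
    (hyx : bitLift (bitLift (bitLift (familyRel F))) y x) : y < x := by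
  have hlift : bitLift (bitLift (bitLift (familyRel F))) ≤ bitLift (bitLift (bitLift (· < ·))) :=
    bitLift_mono (bitLift_mono (bitLift_mono (le_lt_of_le_bitLift hF)))
  simp only [bitLift_lt] at hlift
  exact hlift y x hyx

theorem exists_bitLift_familyRel_of_lt {y x : ℕ} (hyx : y < x) :
    ∃ F ≤ x, familyRel F ≤ bitLift (familyRel F) ∧
      bitLift (bitLift (bitLift (familyRel F))) y x := by
  obtain ⟨B, hxB, hF⟩ := exists_lt_tower_initialSegments_le (Nat.zero_lt_of_lt hyx)
  refine ⟨_, hF, familyRel_initialSegments_le_bitLift B, ?_⟩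
  have hbase : ∀ y < B, ∀ x < B, (familyRel (initialSegments B) y x ↔ y < x) :=
    fun y _ x hx => by rw [familyRel_initialSegments, and_iff_left hx]
  exact (bitLift_iff_lt_of_lt_two_pow (bitLift_iff_lt_of_lt_two_pow
    (bitLift_iff_lt_of_lt_two_pow hbase)) y (hyx.trans hxB) x hxB).mpr hyx

/-! ### The second order -/

theorem two_pow_dvd_iff_testBit {k a : ℕ} : 2 ^ k ∣ a ↔ ∀ j < k, a.testBit j = false := by
  constructor
  · rintro ⟨b, rfl⟩ j hj
    simp [Nat.testBit_two_pow_mul, hj.not_ge]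
  · intro h
    refine Nat.dvd_of_mod_eq_zero (Nat.zero_of_testBit_eq_false fun j => ?_)
    rw [Nat.testBit_mod_two_pow]
    by_cases hj : j < k <;> simp [hj, h]

/-- The set of natural numbers coded by `x`: an even `x` codes the positions of its binary digits
`1`, an odd `x` codes the final segment `{x, x + 1, ...}`. -/
def code (x i : ℕ) : Bool :=
  if Odd x then decide (x ≤ i) else x.testBit i

theorem code_of_odd {x : ℕ} (hx : Odd x) (i : ℕ) : code x i = decide (x ≤ i) :=
  if_pos hx

theorem code_of_even {x : ℕ} (hx : Even x) (i : ℕ) : code x i = x.testBit i :=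
  if_neg (Nat.not_odd_iff_even.mpr hx)

theorem code_of_le {x n : ℕ} (h : x ≤ n) : code x n = decide (Odd x) := by
  rcases Nat.even_or_odd x with hx | hx
  · rw [code_of_even hx, Nat.testBit_eq_false_of_lt (h.trans_lt Nat.lt_two_pow_self)]
    simpa using hx
  · simp [code_of_odd hx, h, hx]

theorem eq_of_code_eq {n x y : ℕ} (hx : x ≤ n) (hy : y ≤ n)
    (h : ∀ i ≤ n, code x i = code y i) : x = y := by
  have hparity : Odd x ↔ Odd y := by
    simpa only [code_of_le hx, code_of_le hy, decide_eq_decide] using h n le_rfl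
  rcases Nat.even_or_odd x with hxe | hxo
  · have hye : Even y := by
      rwa [← Nat.not_odd_iff_even, ← hparity, Nat.not_odd_iff_even]
    refine Nat.eq_of_testBit_eq fun i => ?_
    rcases le_or_gt i n with hi | hi
    · rw [← code_of_even hxe, ← code_of_even hye, h i hi]
    · have testBit_eq_false {a : ℕ} (ha : a ≤ n) : a.testBit i = false :=
        Nat.testBit_eq_false_of_lt ((ha.trans_lt hi).trans Nat.lt_two_pow_self)
      rw [testBit_eq_false hx, testBit_eq_false hy]
  · have hyo := hparity.mp hxo
    simp only [code_of_odd hxo, code_of_odd hyo, decide_eq_decide] at h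
    exact le_antisymm ((h y hy).mpr le_rfl) ((h x hx).mp le_rfl)

/-- The second order: natural numbers are compared lexicographically by their codes. -/
def codeLT (x y : ℕ) : Prop :=
  toLex (code x) < toLex (code y)

local infix:50 " ◁ " => codeLT

theorem codeLT_iff {x y : ℕ} :
    x ◁ y ↔ ∃ i, (∀ j < i, code x j = code y j) ∧ code x i = false ∧ code y i = true := by
  simp only [← Bool.lt_iff]
  rfl

theorem codeLT_irrefl (x : ℕ) : ¬ x ◁ x :=
  lt_irrefl _

theorem codeLT_trans (x y z : ℕ) : x ◁ y → y ◁ z → x ◁ z :=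
  lt_trans

theorem codeLT_or_codeLT_of_ne (x y : ℕ) (h : x ≠ y) : x ◁ y ∨ y ◁ x :=
  lt_or_gt_of_ne fun hcode => h <|
    eq_of_code_eq (le_max_left x y) (le_max_right x y) fun i _ => congrFun (toLex.injective hcode) i

theorem not_codeLT_iff_of_ne {x y : ℕ} (h : x ≠ y) : ¬ x ◁ y ↔ y ◁ x :=
  ⟨(codeLT_or_codeLT_of_ne x y h).resolve_left, fun h => lt_asymm h⟩

theorem odd_codeLT_iff {x y : ℕ} (hx : Odd x) : x ◁ y ↔ ∃ i < x, code y i = true := by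
  simp only [codeLT_iff, code_of_odd hx, decide_eq_false_iff_not, not_le]
  refine ⟨fun ⟨i, _, hi, hyi⟩ => ⟨i, hi, hyi⟩, fun hex => ?_⟩
  obtain ⟨hi, hyi⟩ := Nat.find_spec hex
  refine ⟨Nat.find hex, fun j hj => ?_, hi, hyi⟩
  have hjx : j < x := hj.trans hi
  have hyj : ¬ code y j = true := fun h => Nat.find_min hex hj ⟨hjx, h⟩
  simp [hyj, hjx]

theorem odd_codeLT_odd_iff {x y : ℕ} (hx : Odd x) (hy : Odd y) : x ◁ y ↔ y < x := by
  simp only [odd_codeLT_iff hx, code_of_odd hy, decide_eq_true_iff]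
  exact ⟨fun ⟨i, hi, hyi⟩ => hyi.trans_lt hi, fun h => ⟨y, h, le_rfl⟩⟩

theorem odd_codeLT_even_iff {x y : ℕ} (hx : Odd x) (hy : Even y) : x ◁ y ↔ ¬ 2 ^ x ∣ y := by
  simp [odd_codeLT_iff hx, code_of_even hy, two_pow_dvd_iff_testBit]

theorem even_codeLT_odd_iff {x y : ℕ} (hx : Even x) (hy : Odd y) : x ◁ y ↔ 2 ^ y ∣ x := by
  have hne : y ≠ x := by
    rintro rfl
    exact Nat.not_even_iff_odd.mpr hy hx
  rw [← not_codeLT_iff_of_ne hne, odd_codeLT_even_iff hy hx, not_not]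

theorem even_codeLT_two_pow_iff {x c : ℕ} (hx : Even x) (hc : c ≠ 0) :
    x ◁ 2 ^ c ↔ 2 ^ (c + 1) ∣ x := by
  have hpow : Even (2 ^ c) := even_two.pow_of_ne_zero hc
  simp only [codeLT_iff, code_of_even hx, code_of_even hpow, two_pow_dvd_iff_testBit,
    Nat.testBit_two_pow, decide_eq_true_iff, Nat.lt_succ_iff_lt_or_eq]
  constructor
  · rintro ⟨_, hlt, hxc, rfl⟩ j (hj | rfl)
    · rw [hlt j hj, decide_eq_false hj.ne']
    · exact hxc
  · intro h
    exact ⟨c, fun j hj => by rw [h j (.inl hj), decide_eq_false hj.ne'], h c (.inr rfl), rfl⟩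

/-! ### Definability from `Bit` -/

theorem prefixDefinable_testBit : PrefixDefinable₂ bitStruct fun a i => a.testBit i :=
  prefixDefinable₂_of_relMap (L := LBit) BitRel.bit fun _ _ => Iff.rfl

namespace PrefixDefinable

variable {α : Type*} {Q : (α → ℕ) → ℕ → Prop}

theorem exists_testBit (i : α)
    (h : PrefixDefinable bitStruct
      fun w : α ⊕ Unit → ℕ => Q (fun i => w (Sum.inl i)) (w (Sum.inr ()))) :
    PrefixDefinable bitStruct fun v => ∃ z, (v i).testBit z ∧ Q v z :=
  h.exists_bounded prefixDefinable_testBit (fun hz => (lt_of_testBit hz).le) i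

theorem forall_testBit (i : α)
    (h : PrefixDefinable bitStruct
      fun w : α ⊕ Unit → ℕ => Q (fun i => w (Sum.inl i)) (w (Sum.inr ()))) :
    PrefixDefinable bitStruct fun v => ∀ z, (v i).testBit z → Q v z :=
  h.forall_bounded prefixDefinable_testBit (fun hz => (lt_of_testBit hz).le) i

end PrefixDefinable

theorem prefixDefinable_bitLift {r : ℕ → ℕ → ℕ → Prop} (hr : PrefixDefinable₃ bitStruct r) :
    PrefixDefinable₃ bitStruct fun F => bitLift (r F) :=
  .exists_testBit 2 <| .and (.not (prefixDefinable_testBit.comp₂ _ _)) <|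
    .forall_testBit _ <| .imp (.not (prefixDefinable_testBit.comp₂ _ _)) (hr.comp₃ _ _ _)

theorem prefixDefinable_familyRel : PrefixDefinable₃ bitStruct familyRel :=
  .exists_testBit 0 <| .and (prefixDefinable_testBit.comp₂ _ _) <| .exists_testBit _ <|
    .and (prefixDefinable_testBit.comp₂ _ _) (.not (prefixDefinable_testBit.comp₂ _ _))

theorem lt_of_familyRel {F y x : ℕ} : familyRel F y x → y < F ∧ x < F :=
  fun ⟨_, hu, hy, _, hw, hx, _⟩ =>
    ⟨(lt_of_testBit hy).trans (lt_of_testBit hu), (lt_of_testBit hx).trans (lt_of_testBit hw)⟩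

theorem prefixDefinable_familyRel_le_bitLift :
    PrefixDefinable₁ bitStruct fun F => familyRel F ≤ bitLift (familyRel F) := by
  refine .forall_of_forall_le (.forall_of_forall_le (.imp
    (prefixDefinable_familyRel.comp₃ _ _ _)
    ((prefixDefinable_bitLift prefixDefinable_familyRel).comp₃ _ _ _)) ?_) ?_
  · exact fun n v hv h x hyx => h x ((lt_of_familyRel hyx).2.le.trans (hv _)) hyx
  · exact fun n v hv h y x hyx => h y ((lt_of_familyRel hyx).1.le.trans (hv _)) x hyx

theorem prefixDefinable_lt_bitStruct : PrefixDefinable₂ bitStruct fun a b => a < b := by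
  have hlift : PrefixDefinable₃ bitStruct fun F => bitLift (bitLift (bitLift (familyRel F))) :=
    prefixDefinable_bitLift (prefixDefinable_bitLift (prefixDefinable_bitLift
      prefixDefinable_familyRel))
  refine .congr
    (fun v => show v 0 < v 1 ↔ ∃ F, familyRel F ≤ bitLift (familyRel F) ∧
        bitLift (bitLift (bitLift (familyRel F))) (v 0) (v 1) from ?_)
    (.exists_of_exists_le (.and (prefixDefinable_familyRel_le_bitLift.comp₁ _)
      (hlift.comp₃ _ _ _)) ?_)
  · exact ⟨fun h => (exists_bitLift_familyRel_of_lt h).imp fun _ => And.right,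
      fun ⟨_, hF, h⟩ => lt_of_bitLift_familyRel hF h⟩
  · rintro n v hv ⟨F, hF, h⟩
    obtain ⟨F', hle, h'⟩ := exists_bitLift_familyRel_of_lt (lt_of_bitLift_familyRel hF h)
    exact ⟨F', hle.trans (hv _), h'⟩

theorem prefixDefinable_odd_bitStruct : PrefixDefinable₁ bitStruct Odd :=
  .congr (fun v => show Odd (v 0) ↔ ∃ i, (v 0).testBit i ∧ i = 0 by
      simp [Nat.odd_iff, Nat.testBit_zero])
    (.exists_testBit 0 ((prefixDefinable_lt_bitStruct.eq_const_of_lt 0).comp₁ _))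

theorem prefixDefinable_code : PrefixDefinable₂ bitStruct fun x i => code x i = true :=
  .congr
    (fun v => show code (v 0) (v 1) = true ↔
        (Odd (v 0) → v 0 ≤ v 1) ∧ (¬ Odd (v 0) → (v 0).testBit (v 1)) by
      by_cases hx : Odd (v 0) <;> simp [code, hx])
    (.and (.imp (prefixDefinable_odd_bitStruct.comp₁ _)
        (prefixDefinable_lt_bitStruct.le_of_lt.comp₂ _ _))
      (.imp (.not (prefixDefinable_odd_bitStruct.comp₁ _)) (prefixDefinable_testBit.comp₂ _ _)))

theorem prefixDefinable_codeLT : PrefixDefinable₂ bitStruct codeLT := by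
  refine .congr
    (fun v => show v 0 ◁ v 1 ↔ ∃ i, (∀ j < i, code (v 0) j = true ↔ code (v 1) j = true) ∧
        ¬ code (v 0) i = true ∧ code (v 1) i = true by
      simp only [codeLT_iff, Bool.eq_iff_iff (b := code (v 1) _), Bool.not_eq_true])
    (.exists_of_exists_le (.and
      (prefixDefinable_lt_bitStruct.forall_lt _
        (.iff (prefixDefinable_code.comp₂ _ _) (prefixDefinable_code.comp₂ _ _)))
      (.and (.not (prefixDefinable_code.comp₂ _ _)) (prefixDefinable_code.comp₂ _ _))) ?_)
  rintro n v hv ⟨i, hlt, hx, hy⟩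
  refine ⟨i, not_lt.mp fun hni => ?_, hlt, hx, hy⟩
  have hxy : v 0 = v 1 := eq_of_code_eq (hv 0) (hv 1) fun j hj =>
    Bool.eq_iff_iff.mpr (hlt j (hj.trans_lt hni))
  exact hx (hxy ▸ hy)

/-! ### Definability of `Bit` -/

theorem odd_iff_forall_codeLT {x : ℕ} :
    Odd x ↔ x ≠ 0 ∧ x ≠ 2 ∧ ∀ y < x, y ≠ 0 → x ◁ y := by
  constructor
  · intro hx
    refine ⟨?_, ?_, fun y hyx hy => ?_⟩
    · rintro rfl
      exact Nat.not_odd_zero hx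
    · rintro rfl
      exact absurd hx (by decide)
    · rcases Nat.even_or_odd y with hye | hyo
      · exact (odd_codeLT_even_iff hx hye).mpr <|
          Nat.not_dvd_of_pos_of_lt (Nat.pos_of_ne_zero hy) (hyx.trans Nat.lt_two_pow_self)
      · exact (odd_codeLT_odd_iff hx hyo).mpr hyx
  -- An even `x ≥ 4` is preceded by `x - 1`, since `2 ^ (x - 1)` does not divide it.
  · rintro ⟨h0, h2, h⟩
    by_contra hx
    rw [Nat.not_odd_iff_even] at hx
    obtain ⟨k, rfl⟩ : ∃ k, x = k + 3 := ⟨x - 3, by grind⟩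
    have hodd : Odd (k + 2) := by grind
    have hlt : k + 3 < 2 ^ (k + 2) := by
      have : k < 2 ^ k := Nat.lt_two_pow_self
      rw [pow_add]
      omega
    have hpred : k + 2 ◁ k + 3 := (odd_codeLT_even_iff hodd hx).mpr <|
      Nat.not_dvd_of_pos_of_lt (Nat.succ_pos _) hlt
    exact codeLT_irrefl _ (codeLT_trans _ _ _ hpred (h _ (Nat.lt_succ_self _) (Nat.succ_ne_zero _)))

theorem odd_and_two_pow_dvd_iff {x y : ℕ} : Odd x ∧ 2 ^ x ∣ y ↔ Odd x ∧ ¬ Odd y ∧ y ◁ x := by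
  refine and_congr_right fun hx => ⟨fun h => ?_, fun ⟨hy, h⟩ => ?_⟩
  · have hy : Even y := (even_two.pow_of_ne_zero hx.pos.ne').trans_dvd h
    exact ⟨Nat.not_odd_iff_even.mpr hy, (even_codeLT_odd_iff hy hx).mpr h⟩
  · exact (even_codeLT_odd_iff (Nat.not_odd_iff_even.mp hy) hx).mp h

theorem odd_and_eq_two_pow_iff {x p : ℕ} :
    Odd x ∧ p = 2 ^ x ↔
      (Odd x ∧ 2 ^ x ∣ p) ∧ p ≠ 0 ∧ ∀ q < p, q ≠ 0 → ¬ (Odd x ∧ 2 ^ x ∣ q) := by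
  constructor
  · rintro ⟨hx, rfl⟩
    exact ⟨⟨hx, dvd_rfl⟩, (Nat.two_pow_pos x).ne', fun q hq hq0 hdvd =>
      Nat.not_dvd_of_pos_of_lt (Nat.pos_of_ne_zero hq0) hq hdvd.2⟩
  · rintro ⟨⟨hx, hp⟩, hp0, hmin⟩
    refine ⟨hx, le_antisymm (not_lt.mp fun hlt => ?_) (Nat.le_of_dvd (Nat.pos_of_ne_zero hp0) hp)⟩
    exact hmin _ hlt (Nat.two_pow_pos x).ne' ⟨hx, dvd_rfl⟩

theorem two_pow_dvd_iff {b y : ℕ} :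
    2 ^ b ∣ y ↔ b = 0 ∨ y = 0 ∨ (Odd b ∧ 2 ^ b ∣ y) ∨
      ∃ c < b, b = c + 1 ∧ ∃ p < y, (Odd c ∧ p = 2 ^ c) ∧ ¬ Odd y ∧ y ◁ p := by
  constructor
  · intro h
    rcases Nat.even_or_odd b with hb | hb
    · obtain _ | c := b
      · exact .inl rfl
      rcases Nat.eq_zero_or_pos y with rfl | hy
      · exact .inr (.inl rfl)
      have hc : Odd c := by grind
      have hye : Even y := (even_two.pow_of_ne_zero c.succ_ne_zero).trans_dvd h
      exact .inr <| .inr <| .inr ⟨c, c.lt_succ_self, rfl, 2 ^ c,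
        (Nat.pow_lt_pow_right one_lt_two c.lt_succ_self).trans_le (Nat.le_of_dvd hy h), ⟨hc, rfl⟩,
        Nat.not_odd_iff_even.mpr hye, (even_codeLT_two_pow_iff hye hc.pos.ne').mpr h⟩
    · exact .inr (.inr (.inl ⟨hb, h⟩))
  · rintro (rfl | rfl | ⟨-, h⟩ | ⟨c, -, rfl, _, -, ⟨hc, rfl⟩, hy, h⟩)
    · exact one_dvd y
    · exact dvd_zero _
    · exact h
    · exact (even_codeLT_two_pow_iff (Nat.not_odd_iff_even.mp hy) hc.pos.ne').mp h

theorem testBit_iff_exists_two_pow_dvd {a b : ℕ} :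
    a.testBit b ↔ ∃ y ≤ a, 2 ^ b ∣ y ∧ ∀ z ≤ a, 2 ^ (b + 1) ∣ z → z < y := by
  have mul_le_iff (q : ℕ) : 2 ^ b * q ≤ a ↔ q ≤ a / 2 ^ b := by
    rw [Nat.le_div_iff_mul_le (Nat.two_pow_pos b), mul_comm]
  rw [Nat.testBit_eq_decide_div_mod_eq, decide_eq_true_iff]
  constructor
  · intro hodd
    refine ⟨2 ^ b * (a / 2 ^ b), Nat.mul_div_le a _, dvd_mul_right _ _, ?_⟩
    rintro _ hza ⟨k, rfl⟩
    rw [pow_succ, mul_assoc] at hza ⊢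
    rw [mul_le_iff] at hza
    exact Nat.mul_lt_mul_of_pos_left (by omega) (Nat.two_pow_pos b)
  · rintro ⟨_, hya, ⟨q, rfl⟩, hlt⟩
    by_contra heven
    obtain ⟨k, hk⟩ : ∃ k, a / 2 ^ b = 2 * k := ⟨a / 2 ^ b / 2, by omega⟩
    rw [mul_le_iff, hk] at hya
    have hka : 2 ^ b * (2 * k) ≤ a := (mul_le_iff _).mpr hk.ge
    have := hlt _ hka ⟨k, by ring⟩
    exact this.not_ge (Nat.mul_le_mul_left _ hya)

theorem testBit_iff_exists_succ {a b : ℕ} :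
    a.testBit b ↔ ∃ c ≤ a, c = b + 1 ∧
      ∃ y ≤ a, 2 ^ b ∣ y ∧ ∀ z ≤ a, 2 ^ c ∣ z → z < y := by
  refine testBit_iff_exists_two_pow_dvd.trans ⟨fun h => ?_, fun ⟨_, _, hc, h⟩ => hc ▸ h⟩
  exact ⟨b + 1, lt_of_testBit (testBit_iff_exists_two_pow_dvd.mpr h), rfl, h⟩

theorem prefixDefinable_lt_pairStruct (R : ℕ → ℕ → Prop) :
    PrefixDefinable₂ (pairStruct R) fun a b => a < b :=
  prefixDefinable₂_of_relMap (L := LPair) RelPair.lt fun _ _ => Iff.rfl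

theorem prefixDefinable_snd_pairStruct (R : ℕ → ℕ → Prop) : PrefixDefinable₂ (pairStruct R) R :=
  prefixDefinable₂_of_relMap (L := LPair) RelPair.snd fun _ _ => Iff.rfl

namespace PrefixDefinable

variable {L : FirstOrder.Language} {S : ∀ n : ℕ, L.Structure (Fin (n + 1))}
  (hlt : PrefixDefinable₂ S fun a b => a < b)
  (hord : PrefixDefinable₂ S codeLT)

include hlt hord

theorem odd_of_lt_of_codeLT : PrefixDefinable₁ S Odd :=
  .congr (fun _ => odd_iff_forall_codeLT)
    (.and (.not (hlt.eq_const_of_lt 0)) (.and (.not (hlt.eq_const_of_lt 2))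
      (hlt.forall_lt 0 (.imp (.not ((hlt.eq_const_of_lt 0).comp₁ _)) (hord.comp₂ _ _)))))

theorem odd_and_two_pow_dvd_of_lt_of_codeLT : PrefixDefinable₂ S fun x y => Odd x ∧ 2 ^ x ∣ y :=
  have hodd := hlt.odd_of_lt_of_codeLT hord
  .congr (fun _ => odd_and_two_pow_dvd_iff)
    (.and (hodd.comp₁ _) (.and (.not (hodd.comp₁ _)) (hord.comp₂ _ _)))

theorem odd_and_eq_two_pow_of_lt_of_codeLT : PrefixDefinable₂ S fun x p => Odd x ∧ p = 2 ^ x :=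
  have hdvd := hlt.odd_and_two_pow_dvd_of_lt_of_codeLT hord
  have hzero := hlt.eq_const_of_lt 0
  .congr (fun _ => odd_and_eq_two_pow_iff)
    (.and hdvd (.and (.not (hzero.comp₁ _))
      (hlt.forall_lt 1 (.imp (.not (hzero.comp₁ _)) (.not (hdvd.comp₂ _ _))))))

theorem two_pow_dvd_of_lt_of_codeLT : PrefixDefinable₂ S fun b y => 2 ^ b ∣ y :=
  have hzero := hlt.eq_const_of_lt 0
  .congr (fun _ => two_pow_dvd_iff)
    (.or (hzero.comp₁ _) (.or (hzero.comp₁ _) (.or (hlt.odd_and_two_pow_dvd_of_lt_of_codeLT hord)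
      (hlt.exists_lt 0 (.and (hlt.succ_of_lt.comp₂ _ _)
        (hlt.exists_lt _ (.and ((hlt.odd_and_eq_two_pow_of_lt_of_codeLT hord).comp₂ _ _)
          (.and (.not ((hlt.odd_of_lt_of_codeLT hord).comp₁ _)) (hord.comp₂ _ _)))))))))

theorem testBit_of_lt_of_codeLT : PrefixDefinable₂ S fun a b => a.testBit b :=
  have hdvd := hlt.two_pow_dvd_of_lt_of_codeLT hord
  .congr (fun _ => testBit_iff_exists_succ)
    (hlt.exists_le 0 (.and (hlt.succ_of_lt.comp₂ _ _)
      (hlt.exists_le _ (.and (hdvd.comp₂ _ _)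
        (hlt.forall_le _ (.imp (hdvd.comp₂ _ _) (hlt.comp₂ _ _)))))))

end PrefixDefinable

/-- Theorem 5.2: there is a strict linear order `◁'` on `ℕ` such that
`FO(<,◁')` and `FO(Bit)` define the same relations in every finite prefix: `Bit` is
`FO(<,◁')`-definable, and both `<` and `◁'` are `FO(Bit)`-definable. -/
theorem two_linear_orders_capture_Bit :
    ∃ ordb : ℕ → ℕ → Prop,
      (∀ x, ¬ ordb x x) ∧
      (∀ x y z, ordb x y → ordb y z → ordb x z) ∧
      (∀ x y, x ≠ y → ordb x y ∨ ordb y x) ∧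
      (∃ φ : LPair.Formula (Fin 2),
        ∀ n : ℕ,
          letI := pairStruct ordb n
          ∀ a b : Fin (n + 1),
            φ.Realize ![a, b] ↔ Nat.testBit (a : ℕ) (b : ℕ) = true) ∧
      (∃ ψlt : LBit.Formula (Fin 2),
        ∀ n : ℕ,
          letI := bitStruct n
          ∀ a b : Fin (n + 1), ψlt.Realize ![a, b] ↔ (a : ℕ) < (b : ℕ)) ∧
      (∃ ψb : LBit.Formula (Fin 2),
        ∀ n : ℕ,
          letI := bitStruct n
          ∀ a b : Fin (n + 1), ψb.Realize ![a, b] ↔ ordb (a : ℕ) (b : ℕ)) := by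
  have hbit : PrefixDefinable₂ (pairStruct codeLT) fun a b => a.testBit b :=
    (prefixDefinable_lt_pairStruct codeLT).testBit_of_lt_of_codeLT
      (prefixDefinable_snd_pairStruct codeLT)
  exact ⟨codeLT, codeLT_irrefl, codeLT_trans, codeLT_or_codeLT_of_ne, hbit.exists_formula,
    prefixDefinable_lt_bitStruct.exists_formula, prefixDefinable_codeLT.exists_formula⟩
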